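/- Let E ⊂ ℝ^N be a bounded measurable set and let η : ℝ^N → ℝ^N be bounded and of class C³ with bounded derivatives. Define W := (η·∇)η − (div η)·η and Φ_t(x) := x + t·η(x) + (t²/2)·W(x), and set V(t) := ∫_E det ∇Φ_t(x) dx, where ∇Φ_t(x) is the N×N matrix with entries δ_{ij} + t ∂η^i/∂x_j + (t²/2) ∂W^i/∂x_j. Then V is twice differentiable at t = 0 with V(0) = |E| (the Lebesgue measure of E), V'(0) = ∫_E div η dx, and V''(0) = 0. -/

import Mathlib

open Filter MeasureTheory Topology
open scoped RealInnerProductSpace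

namespace PaperAC

/-- The partial derivative `∂f/∂x_j` of a scalar function on `ℝ^N`. -/
noncomputable def pdv {N : ℕ} (f : (Fin N → ℝ) → ℝ) (j : Fin N) (x : Fin N → ℝ) : ℝ :=
  fderiv ℝ f x (Pi.single j 1)

/-- The advection field `(η·∇)η`, with components `((η·∇)η)^i = ∑_j η^j ∂η^i/∂x_j`. -/
noncomputable def advf {N : ℕ} (η : (Fin N → ℝ) → (Fin N → ℝ)) (x : Fin N → ℝ) :
    Fin N → ℝ :=
  fun i => ∑ j, η x j * pdv (fun z => η z i) j x

/-- The gradient `∇u` of a scalar function on `ℝ^N`. -/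
noncomputable def grad {N : ℕ} (u : (Fin N → ℝ) → ℝ) (x : Fin N → ℝ) : Fin N → ℝ :=
  fun i => pdv u i x

/-- `X₀ := (D²u·η, η) + (∇u, 2(η·∇)η − ζ)`. -/
noncomputable def X0 {N : ℕ} (u : (Fin N → ℝ) → ℝ) (η ζ : (Fin N → ℝ) → (Fin N → ℝ))
    (y : Fin N → ℝ) : ℝ :=
  (∑ i, ∑ j, pdv (pdv u i) j y * η y i * η y j)
    + ∑ i, pdv u i y * (2 * advf η y i - ζ y i)

/-- `−∇u·η`. -/
noncomputable def nGradDot {N : ℕ} (u : (Fin N → ℝ) → ℝ) (η : (Fin N → ℝ) → (Fin N → ℝ))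
    (x : Fin N → ℝ) : ℝ :=
  -(∑ i, pdv u i x * η x i)

/-- `F_z`, the partial derivative of `F = F(z,p)` in the scalar variable. -/
noncomputable def Fz {N : ℕ} (F : ℝ × (Fin N → ℝ) → ℝ) (z : ℝ) (p : Fin N → ℝ) : ℝ :=
  fderiv ℝ F (z, p) (1, 0)

/-- `F_{p_i}`. -/
noncomputable def Fp {N : ℕ} (F : ℝ × (Fin N → ℝ) → ℝ) (i : Fin N) (z : ℝ) (p : Fin N → ℝ) :
    ℝ :=
  fderiv ℝ F (z, p) (0, Pi.single i 1)

/-- `F_{zz}`. -/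
noncomputable def Fzz {N : ℕ} (F : ℝ × (Fin N → ℝ) → ℝ) (z : ℝ) (p : Fin N → ℝ) : ℝ :=
  fderiv ℝ (fun q => fderiv ℝ F q (1, 0)) (z, p) (1, 0)

/-- `F_{z p_i}`. -/
noncomputable def Fzp {N : ℕ} (F : ℝ × (Fin N → ℝ) → ℝ) (i : Fin N) (z : ℝ) (p : Fin N → ℝ) :
    ℝ :=
  fderiv ℝ (fun q => fderiv ℝ F q ((0 : ℝ), Pi.single i 1)) (z, p) (1, 0)

/-- `F_{p_i p_j}`. -/
noncomputable def Fpp {N : ℕ} (F : ℝ × (Fin N → ℝ) → ℝ) (i j : Fin N) (z : ℝ)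
    (p : Fin N → ℝ) : ℝ :=
  fderiv ℝ (fun q => fderiv ℝ F q ((0 : ℝ), Pi.single j 1)) (z, p) ((0 : ℝ), Pi.single i 1)

/-- `𝔄₁(t) = A(u ∘ Φ_t⁻¹) = ∫_Ω F(u_t, ∇u_t)`, the inner deformation of the functional
`A(w) := ∫_Ω F(w, ∇w)`. -/
noncomputable def innerA {N : ℕ} (Ω : Set (Fin N → ℝ)) (F : ℝ × (Fin N → ℝ) → ℝ)
    (u : (Fin N → ℝ) → ℝ) (Φ : ℝ → (Fin N → ℝ) → (Fin N → ℝ)) (t : ℝ) : ℝ :=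
  ∫ y in Ω, F (u (Function.invFun (Φ t) y),
      grad (fun z => u (Function.invFun (Φ t) z)) y)

/-- `t ↦ A(u + tφ) = ∫_Ω F(u + tφ, ∇u + t∇φ)`, the outer deformation of the functional
`A(w) := ∫_Ω F(w, ∇w)`. -/
noncomputable def gateauxA {N : ℕ} (Ω : Set (Fin N → ℝ)) (F : ℝ × (Fin N → ℝ) → ℝ)
    (u φ : (Fin N → ℝ) → ℝ) (t : ℝ) : ℝ :=
  ∫ x in Ω, F (u x + t * φ x, fun i => pdv u i x + t * pdv φ i x)

/-- The matrix `M_t(x)` with entries `δ_{ij} + t ∂η^i/∂x_j + (t²/2) ∂W^i/∂x_j`. -/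
noncomputable def defMat {N : ℕ} (η W : (Fin N → ℝ) → (Fin N → ℝ)) (t : ℝ)
    (x : Fin N → ℝ) : Matrix (Fin N) (Fin N) ℝ :=
  Matrix.of fun i j =>
    (if i = j then (1 : ℝ) else 0) + t * pdv (fun z => η z i) j x
      + (t ^ 2 / 2) * pdv (fun z => W z i) j x

/-- `Φ(a) := ∫_0^a |s² − 1| ds`. -/
noncomputable def PhiAC (a : ℝ) : ℝ := ∫ s in (0 : ℝ)..a, |s ^ 2 - 1|

/-- All partial derivatives (= iterated Fréchet derivatives) of `f` up to order `n` are
bounded; the case `i = 0` says `f` itself is bounded. -/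
def BddUpTo {N : ℕ} {E : Type*} [NormedAddCommGroup E] [NormedSpace ℝ E]
    (n : ℕ) (f : (Fin N → ℝ) → E) : Prop :=
  ∀ i : ℕ, i ≤ n → ∃ C : ℝ, ∀ x, ‖iteratedFDeriv ℝ i f x‖ ≤ C


section helpers
open Polynomial

theorem aux_coeff_one {R : Type*} [CommRing R] {n : ℕ} (A B : Matrix (Fin n) (Fin n) R) :
    ((1 + (X : R[X]) • A.map C + (X : R[X]) ^ 2 • B.map C).det.coeff 0 = 1) ∧
    ((1 + (X : R[X]) • A.map C + (X : R[X]) ^ 2 • B.map C).det.coeff 1 = A.trace) := by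
  have h : (1 + (X : R[X]) • A.map C + (X : R[X]) ^ 2 • B.map C)
      = 1 + (X : R[X]) • (A.map C + (X : R[X]) • B.map C) := by
    rw [smul_add, smul_smul, add_assoc, pow_two]
  have tA : (A.map C : Matrix _ _ R[X]).trace = C A.trace := by
    simp [Matrix.trace]
  have tB : (B.map C : Matrix _ _ R[X]).trace = C B.trace := by
    simp [Matrix.trace]
  rw [h, Matrix.det_one_add_smul, Matrix.trace_add, Matrix.trace_smul, tA, tB]
  generalize eval (R := R[X]) _ _ = g
  have : (1 + (C A.trace + (X : R[X]) • C B.trace) * X + g * X ^ 2 : R[X])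
    = 1 + X * (C A.trace + X * (C B.trace + g)) := by
    rw [smul_eq_mul]; ring
  rw [this]
  constructor
  · simp
  · rw [show (1 : ℕ) = 0 + 1 from rfl, coeff_add, coeff_X_mul]; simp [coeff_one]

theorem aux_e2 {R : Type*} [CommRing R] {n : ℕ} (A : Matrix (Fin n) (Fin n) R) :
    ∃ g h : R[X], (1 + (X : R[X]) • A.map C).det = 1 + C A.trace * X + g * X ^ 2 ∧
      (1 + (-X : R[X]) • A.map C).det = 1 - C A.trace * X + h * X ^ 2 ∧
      g.coeff 0 = h.coeff 0 := by
  have tA : (A.map C : Matrix _ _ R[X]).trace = C A.trace := by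
    simp [Matrix.trace]
  refine ⟨eval X (divX (divX (1 + (X : R[X][X]) • (A.map C).map C).det)),
    eval (-X) (divX (divX (1 + (X : R[X][X]) • (A.map C).map C).det)), ?_, ?_, ?_⟩
  · rw [Matrix.det_one_add_smul, tA]
  · rw [Matrix.det_one_add_smul, tA, neg_sq, mul_neg, ← sub_eq_add_neg]
  · generalize divX (R := R[X]) (divX _) = p
    rw [coeff_zero_eq_eval_zero, coeff_zero_eq_eval_zero, ← coe_evalRingHom,
      ← eval₂_hom, ← eval₂_hom]
    simp

theorem aux_coeff_two {R : Type*} [CommRing R] {n : ℕ} (A B : Matrix (Fin n) (Fin n) R) :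
    2 * (1 + (X : R[X]) • A.map C + (X : R[X]) ^ 2 • B.map C).det.coeff 2
      = 2 * B.trace + A.trace ^ 2 - (A * A).trace := by
  obtain ⟨g, h, hg, hh, hgh⟩ := aux_e2 A
  have tA : (A.map C : Matrix _ _ R[X]).trace = C A.trace := by
    simp [Matrix.trace]
  have key : ∀ B : Matrix (Fin n) (Fin n) R,
      (1 + (X : R[X]) • A.map C + (X : R[X]) ^ 2 • B.map C).det.coeff 2
        = B.trace - (A * A).trace + A.trace ^ 2 - h.coeff 0 := by
    intro B
    obtain ⟨h0, h1⟩ := aux_coeff_one A B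
    have hm : (1 + (X : R[X]) • A.map C + (X : R[X]) ^ 2 • B.map C) * (1 + (-X : R[X]) • A.map C)
        = 1 + (X ^ 2 : R[X]) • ((B - A * A).map C - (X : R[X]) • (B * A).map C) := by
      rw [Matrix.map_sub _ (map_sub C), Matrix.map_mul, Matrix.map_mul]
      simp only [add_mul, mul_add, smul_sub, smul_smul, one_mul, mul_one, Matrix.smul_mul,
        Matrix.mul_smul, neg_smul, mul_neg, smul_neg]
      module
    have hd := congrArg Matrix.det hm
    rw [Matrix.det_mul, hh, Matrix.det_one_add_smul, Matrix.trace_sub, Matrix.trace_smul] at hd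
    have t1 : ((B - A * A).map C : Matrix _ _ R[X]).trace = C (B.trace - (A * A).trace) := by
      simp [Matrix.trace]
    rw [t1] at hd
    generalize eval (R := R[X]) _ _ = k at hd
    generalize ((B * A).map C : Matrix _ _ R[X]).trace = l at hd
    generalize (1 + (X : R[X]) • A.map C + (X : R[X]) ^ 2 • B.map C).det = p at *
    have hd2 := congrArg (fun q : R[X] => q.coeff 2) hd
    have e1 : p * (1 - C A.trace * X + h * X ^ 2)
        = p - C A.trace * (p * X) + (p * h) * X ^ 2 := by ring
    have e2 : 1 + (C (B.trace - (A * A).trace) - (X : R[X]) • l) * X ^ 2 + k * (X ^ 2) ^ 2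
        = 1 + (C (B.trace - (A * A).trace) + X * (- l + k * X)) * X ^ 2 := by
      rw [smul_eq_mul]; ring
    simp only [e1, e2] at hd2
    have c1 : ∀ q : R[X], (q * X ^ 2).coeff 2 = q.coeff 0 := fun q => by
      simpa using coeff_mul_X_pow q 2 0
    have c2 : ∀ q : R[X], (q * X).coeff 2 = q.coeff 1 := fun q => coeff_mul_X q 1
    simp only [coeff_add, coeff_sub, coeff_C_mul, c1, c2, coeff_one, h1, mul_coeff_zero, h0,
      coeff_C_zero, coeff_X_zero] at hd2
    norm_num at hd2
    linear_combination hd2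
  have k0 := key 0
  have : (1 + (X : R[X]) • A.map C + (X : R[X]) ^ 2 • (0 : Matrix (Fin n) (Fin n) R).map C).det
      = 1 + C A.trace * X + g * X ^ 2 := by
    rw [← hg]; simp
  rw [this] at k0
  have c1 : ∀ q : R[X], (q * X ^ 2).coeff 2 = q.coeff 0 := fun q => by
    simpa using coeff_mul_X_pow q 2 0
  simp only [coeff_add, c1, coeff_C_mul, coeff_X, coeff_one, hgh] at k0
  norm_num at k0
  rw [key B]
  linear_combination (-1) * k0

/-- The polynomial in `t` with coefficients continuous functions. -/
theorem aux_main {N : ℕ} (E : Set (Fin N → ℝ)) (hEb : Bornology.IsBounded E)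
    (A B : Matrix (Fin N) (Fin N) C((Fin N → ℝ), ℝ))
    (hAB : B.trace + A.trace ^ 2 - (A * A).trace = 0)
    (F : ℝ → (Fin N → ℝ) → ℝ)
    (hF : ∀ t x, F t x = (Matrix.of fun i j => (if i = j then (1 : ℝ) else 0) + t * A i j x
      + (t ^ 2 / 2) * B i j x).det) :
    (∫ x in E, F 0 x) = (volume E).toReal ∧
    ∃ V' : ℝ → ℝ, (∀ᶠ t in 𝓝 (0 : ℝ), HasDerivAt (fun s : ℝ => ∫ x in E, F s x) (V' t) t) ∧
      V' 0 = (∫ x in E, ∑ i, A i i x) ∧ HasDerivAt V' 0 0 := by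
  set B' : Matrix (Fin N) (Fin N) C((Fin N → ℝ), ℝ) := (1 / 2 : ℝ) • B with hB'
  set P : (C((Fin N → ℝ), ℝ))[X] :=
    (1 + (X : (C((Fin N → ℝ), ℝ))[X]) • A.map C
      + (X : (C((Fin N → ℝ), ℝ))[X]) ^ 2 • B'.map C).det with hP
  obtain ⟨h0, h1⟩ := aux_coeff_one A B'
  have h2 := aux_coeff_two A B'
  rw [← hP] at h0 h1 h2
  have h2' : P.coeff 2 = 0 := by
    have ht : B'.trace = (1 / 2 : ℝ) • B.trace := by rw [hB', Matrix.trace_smul]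
    have h3 : 2 * P.coeff 2 = 0 := by
      rw [h2, ht, ← hAB, two_mul]
      ext x; simp; ring
    rw [two_mul] at h3
    ext x
    have := congrArg (fun f : C((Fin N → ℝ), ℝ) => f x) h3
    simpa using this
  have hFP : ∀ t x, F t x = ∑ k ∈ Finset.range (P.natDegree + 1), P.coeff k x * t ^ k := by
    intro t x
    let ev : C((Fin N → ℝ), ℝ) →+* ℝ :=
      { toFun := fun f => f x, map_one' := rfl, map_mul' := fun _ _ => rfl,
        map_zero' := rfl, map_add' := fun _ _ => rfl }
    have : P.eval₂ ev t = F t x := by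
      rw [hF, ← coe_eval₂RingHom, hP, RingHom.map_det]
      congr 1
      ext i j
      have hb : ev (B' i j) = (1 / 2) * B i j x := rfl
      have ha : ev (A i j) = A i j x := rfl
      by_cases hij : i = j
      · subst hij
        simp [RingHom.mapMatrix_apply, Matrix.map_apply, eval₂_add, eval₂_mul, ha, hb]; ring
      · simp [RingHom.mapMatrix_apply, Matrix.map_apply, eval₂_add, eval₂_mul, hij, ha, hb]; ring
    rw [← this, eval₂_eq_sum_range]
    rfl
  have hint : ∀ f : C((Fin N → ℝ), ℝ), IntegrableOn (fun x => f x) E := by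
    intro f
    obtain ⟨r, hr⟩ := hEb.subset_closedBall 0
    exact (f.continuous.continuousOn.integrableOn_compact
      (isCompact_closedBall (0 : Fin N → ℝ) r)).mono_set hr
  set Q : ℝ[X] := ∑ k ∈ Finset.range (P.natDegree + 1), monomial k (∫ x in E, P.coeff k x) with hQ
  have hV : ∀ t, (∫ x in E, F t x) = Q.eval t := by
    intro t
    simp only [hFP]
    rw [integral_finsetSum _ (fun k _ => (hint (P.coeff k)).mul_const _), hQ, eval_finsetSum]
    refine Finset.sum_congr rfl fun k _ => ?_
    rw [eval_monomial, integral_mul_const]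
  have hQc : ∀ k, Q.coeff k = ∫ x in E, P.coeff k x := by
    intro k
    rw [hQ, finsetSum_coeff]
    simp only [coeff_monomial, Finset.sum_ite_eq', Finset.mem_range]
    split_ifs with hk
    · rfl
    · rw [coeff_eq_zero_of_natDegree_lt (by omega)]; simp
  refine ⟨?_, fun t => (derivative Q).eval t, ?_, ?_, ?_⟩
  · rw [hV, ← coeff_zero_eq_eval_zero, hQc, h0]
    simp [Measure.real]
  · refine Eventually.of_forall fun t => ?_
    simp only [hV]
    exact Q.hasDerivAt t
  · show (derivative Q).eval 0 = _
    rw [← coeff_zero_eq_eval_zero, coeff_derivative, hQc, zero_add, h1]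
    simp [Matrix.trace]
  · have := (derivative Q).hasDerivAt 0
    rw [← coeff_zero_eq_eval_zero, coeff_derivative, coeff_derivative, hQc] at this
    simpa [h2'] using this

end helpers

theorem contDiff_pdv {N : ℕ} {f : (Fin N → ℝ) → ℝ} {m n : WithTop ℕ∞} (hf : ContDiff ℝ n f)
    (h : m + 1 ≤ n) (j : Fin N) : ContDiff ℝ m (pdv f j) :=
  (hf.fderiv_right h).clm_apply contDiff_const

theorem pdv_comm {N : ℕ} {f : (Fin N → ℝ) → ℝ} (hf : ContDiff ℝ 3 f) (i j : Fin N)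
    (x : Fin N → ℝ) : pdv (pdv f i) j x = pdv (pdv f j) i x := by
  have hd : DifferentiableAt ℝ (fderiv ℝ f) x :=
    ((hf.fderiv_right (m := 2) (by norm_num)).differentiable (by norm_num)) x
  have hs : IsSymmSndFDerivAt ℝ f x :=
    hf.contDiffAt.isSymmSndFDerivAt (by simp; norm_num)
  have e : ∀ i j : Fin N, pdv (pdv f i) j x
      = fderiv ℝ (fderiv ℝ f) x (Pi.single j 1) (Pi.single i 1) := by
    intro i j
    have := (hd.hasFDerivAt.clm_apply (hasFDerivAt_const (Pi.single i (1 : ℝ)) x)).fderiv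
    show fderiv ℝ (fun z => fderiv ℝ f z (Pi.single i 1)) x (Pi.single j 1) = _
    rw [this]; simp
  rw [e, e]; exact hs _ _

theorem pdv_W {N : ℕ} (η : (Fin N → ℝ) → (Fin N → ℝ)) (hη : ContDiff ℝ 3 η) (i k : Fin N)
    (x : Fin N → ℝ) :
    pdv (fun z => advf η z i - (∑ c, pdv (fun w => η w c) c z) * η z i) k x
      = (∑ j, (η x j * pdv (pdv (fun z => η z i) j) k x
          + pdv (fun z => η z i) j x * pdv (fun z => η z j) k x))
        - ((∑ c, pdv (fun w => η w c) c x) * pdv (fun z => η z i) k x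
          + η x i * ∑ c, pdv (pdv (fun w => η w c) c) k x) := by
  have hc : ∀ i, ContDiff ℝ 3 (fun z => η z i) := fun i => contDiff_pi.1 hη i
  have hd : ∀ i, DifferentiableAt ℝ (fun z => η z i) x := fun i =>
    (hc i).differentiable (by norm_num) x
  have hp : ∀ i j, DifferentiableAt ℝ (pdv (fun z => η z i) j) x := fun i j =>
    (contDiff_pdv (m := 2) (hc i) (by norm_num) j).differentiable (by norm_num) x
  have h1 := (HasFDerivAt.fun_sum (u := Finset.univ) fun j _ =>
    (hd j).hasFDerivAt.mul (hp i j).hasFDerivAt).sub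
    ((HasFDerivAt.fun_sum (u := Finset.univ) fun c _ => (hp c c).hasFDerivAt).mul
      (hd i).hasFDerivAt)
  have h2 := h1.fderiv
  have h3 : pdv (fun z => advf η z i - (∑ c, pdv (fun w => η w c) c z) * η z i) k x
    = _ := congrArg (fun L : (Fin N → ℝ) →L[ℝ] ℝ => L (Pi.single k 1)) h2
  rw [h3]
  simp [pdv]

theorem div_W {N : ℕ} (η : (Fin N → ℝ) → (Fin N → ℝ)) (hη : ContDiff ℝ 3 η)
    (x : Fin N → ℝ) :
    (∑ i, pdv (fun z => advf η z i - (∑ c, pdv (fun w => η w c) c z) * η z i) i x)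
      + (∑ i, pdv (fun z => η z i) i x) ^ 2
      - (∑ i, ∑ j, pdv (fun z => η z i) j x * pdv (fun z => η z j) i x) = 0 := by
  have hc : ∀ i, ContDiff ℝ 3 (fun z => η z i) := fun i => contDiff_pi.1 hη i
  simp only [pdv_W η hη, Finset.sum_sub_distrib, Finset.sum_add_distrib, ← Finset.mul_sum]
  have : ∑ i, ∑ j, η x j * pdv (pdv (fun z => η z i) j) i x
      = ∑ i, η x i * ∑ c, pdv (pdv (fun w => η w c) c) i x := by
    rw [Finset.sum_comm]
    refine Finset.sum_congr rfl fun i _ => ?_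
    rw [Finset.mul_sum]
    refine Finset.sum_congr rfl fun j _ => ?_
    rw [pdv_comm (hc j)]
  rw [this]; ring

/-- Volume preservation to second order: with
`W := (η·∇)η − (div η)·η` and `Φ_t := id + tη + (t²/2)W`, the function
`V(t) := ∫_E det ∇Φ_t` is twice differentiable at `t = 0` with `V(0) = |E|`,
`V'(0) = ∫_E div η` and `V''(0) = 0`. -/
theorem volume_preserving_to_second_order
    (N : ℕ) (E : Set (Fin N → ℝ)) (hEm : MeasurableSet E) (hEb : Bornology.IsBounded E)
    (η : (Fin N → ℝ) → (Fin N → ℝ))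
    (hη : ContDiff ℝ 3 η) (hηb : BddUpTo 3 η) :
    (∫ x in E,
        (defMat η
          (fun z => fun i => advf η z i - (∑ c, pdv (fun w => η w c) c z) * η z i)
          0 x).det) = (volume E).toReal ∧
    ∃ V' : ℝ → ℝ,
      (∀ᶠ t in 𝓝 (0 : ℝ),
        HasDerivAt
          (fun s : ℝ => ∫ x in E,
            (defMat η
              (fun z => fun i => advf η z i - (∑ c, pdv (fun w => η w c) c z) * η z i)
              s x).det)
          (V' t) t) ∧
      V' 0 = (∫ x in E, ∑ i, pdv (fun z => η z i) i x) ∧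
      HasDerivAt V' 0 0 := by
  have hc : ∀ i, ContDiff ℝ 3 (fun z => η z i) := fun i => contDiff_pi.1 hη i
  have hp : ∀ i j, ContDiff ℝ 2 (pdv (fun z => η z i) j) := fun i j =>
    contDiff_pdv (hc i) (by norm_num) j
  have hW : ∀ i, ContDiff ℝ 2
      (fun z => advf η z i - (∑ c, pdv (fun w => η w c) c z) * η z i) := fun i =>
    (ContDiff.sum fun j _ => ((hc j).of_le (by norm_num)).mul (hp i j)).sub
      ((ContDiff.sum fun c _ => hp c c).mul ((hc i).of_le (by norm_num)))
  have hWp : ∀ i j, ContDiff ℝ 1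
      (pdv (fun z => advf η z i - (∑ c, pdv (fun w => η w c) c z) * η z i) j) := fun i j =>
    contDiff_pdv (hW i) (by norm_num) j
  refine aux_main E hEb
    (Matrix.of fun i j => (⟨pdv (fun z => η z i) j, (hp i j).continuous⟩ : C((Fin N → ℝ), ℝ)))
    (Matrix.of fun i j =>
      (⟨pdv (fun z => advf η z i - (∑ c, pdv (fun w => η w c) c z) * η z i) j,
        (hWp i j).continuous⟩ : C((Fin N → ℝ), ℝ))) ?_ _ (fun t x => rfl)
  ext x
  simpa [Matrix.trace, Matrix.mul_apply] using div_W η hη x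

end PaperAC
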